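/- Let h ≥ 1 and 1 ≤ r₁ ≤ r₂ ≤ … ≤ r_h be integers, r = r₁ + … + r_h, N = 2r + h − 1, and let 𝒜, ℬ be the canonical matrices associated to the partition (r₁,…,r_h). Then the ℂ-vector space 𝔤(𝒜,ℬ) of complex (N+1)×(N+1) matrices X such that both Xᵀ𝒜 + 𝒜X and Xᵀℬ + ℬX lie in the ℂ-linear span of {𝒜, ℬ} has dimension over ℂ equal to δ(r₁,…,r_h) = h + 4 + Σ_{1 ≤ i < j ≤ h} (2r_j + 1) + #{(i,j) : 1 ≤ i < j ≤ h and rᵢ = r_j}. -/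

import Mathlib

open Matrix

/-- Index type of the canonical pencil associated to the partition `rr`:
pairs `(i, p)` with `i : Fin h` and `0 ≤ p ≤ 2 rᵢ`. -/
abbrev PencilIdx (h : ℕ) (rr : Fin h → ℕ) := (i : Fin h) × Fin (2 * rr i + 1)

/-- The first canonical matrix `𝒜` of the pencil `L_{(r₁,…,r_h)}`. -/
def canA (h : ℕ) (rr : Fin h → ℕ) : Matrix (PencilIdx h rr) (PencilIdx h rr) ℂ :=
  Matrix.of fun u v =>
    if u.1 = v.1 ∧
        (((v.2 : ℕ) = (u.2 : ℕ) + rr u.1 ∧ (u.2 : ℕ) < rr u.1) ∨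
         ((u.2 : ℕ) = (v.2 : ℕ) + rr u.1 ∧ (v.2 : ℕ) < rr u.1)) then 1 else 0

/-- The second canonical matrix `ℬ` of the pencil `L_{(r₁,…,r_h)}`. -/
def canB (h : ℕ) (rr : Fin h → ℕ) : Matrix (PencilIdx h rr) (PencilIdx h rr) ℂ :=
  Matrix.of fun u v =>
    if u.1 = v.1 ∧
        (((v.2 : ℕ) = (u.2 : ℕ) + rr u.1 + 1 ∧ (u.2 : ℕ) < rr u.1) ∨
         ((u.2 : ℕ) = (v.2 : ℕ) + rr u.1 + 1 ∧ (v.2 : ℕ) < rr u.1)) then 1 else 0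


/-- The ℂ-linear map `X ↦ XᵀM + MX`. -/
noncomputable def congrDeriv {n : Type*} [Fintype n] (M : Matrix n n ℂ) :
    Matrix n n ℂ →ₗ[ℂ] Matrix n n ℂ where
  toFun X := Xᵀ * M + M * X
  map_add' X Y := by
    simp only [Matrix.transpose_add, Matrix.add_mul, Matrix.mul_add]
    abel
  map_smul' c X := by
    simp only [Matrix.transpose_smul, Matrix.smul_mul, Matrix.mul_smul, smul_add,
      RingHom.id_apply]

/-- The Lie algebra `𝔤(A,B)` of the stabilizer of the pencil spanned by `A` and `B`,
as a ℂ-subspace of the space of matrices: all `X` such that `XᵀA + AX` and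
`XᵀB + BX` lie in the span of `{A, B}`. -/
noncomputable def stabAlg {n : Type*} [Fintype n] (A B : Matrix n n ℂ) :
    Submodule ℂ (Matrix n n ℂ) :=
  Submodule.comap (congrDeriv A) (Submodule.span ℂ {A, B}) ⊓
  Submodule.comap (congrDeriv B) (Submodule.span ℂ {A, B})

/-!
Letting the first `rᵢ` indices of the `i`-th block be the rows and the others the columns of a
Kronecker block turns the canonical pencil into the symmetrization of a direct sum of Kronecker
pencils. A Kronecker block is the multiplication map of binary forms and hence `𝔤𝔩₂`-equivariant, so
the stabilizer acts on the two-dimensional span through all of `𝔤𝔩₂`, which accounts for the summand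
`4`. The kernel of this action annihilates both forms. Its elements are determined by a
banded Toeplitz matrix with `max 0 (rⱼ + 1 - rᵢ)` parameters for every ordered pair `(i, j)` and a
skew pair of Hankel matrices with `rᵢ + rⱼ` parameters for every `i < j`; for `i = j` the skew pair
vanishes.
-/

section BandToeplitz

variable {R : Type*} [Semiring R] {m n : ℕ}

variable (R m n) in
/-- The matrices of the homomorphisms between two Kronecker blocks: the `(m + 1) × (n + 1)` Toeplitz
matrices with symbol supported in the band `0 ≤ q - p ≤ n - m`. -/
def bandToeplitz : Submodule R (Matrix (Fin (m + 1)) (Fin (n + 1)) R) where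
  carrier := {S | (∀ p q, S (Fin.succ p) (Fin.succ q) = S p.castSucc q.castSucc) ∧
    (∀ p, S (Fin.castSucc p) (Fin.last n) = 0) ∧ ∀ p, S (Fin.succ p) 0 = 0}
  add_mem' := by
    rintro S T ⟨hS, hS', hS''⟩ ⟨hT, hT', hT''⟩
    simp [hS, hS', hS'', hT, hT', hT'']
  zero_mem' := by simp
  smul_mem' := by
    rintro c S ⟨hS, hS', hS''⟩
    simp [hS, hS', hS'']

lemma apply_eq_of_mem_bandToeplitz {S : Matrix (Fin (m + 1)) (Fin (n + 1)) R}
    (hS : S ∈ bandToeplitz R m n) (p : Fin (m + 1)) (q : Fin (n + 1)) :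
    S p q = if (p : ℕ) ≤ q then S 0 ⟨q - p, by omega⟩ else 0 := by
  obtain ⟨hdiag, -, hcol⟩ := hS
  induction p using Fin.induction generalizing q with
  | zero => simp
  | succ p ih =>
    cases q using Fin.cases with
    | zero => simp [hcol]
    | succ q => simp [hdiag, ih]

lemma apply_zero_eq_zero_of_mem_bandToeplitz {S : Matrix (Fin (m + 1)) (Fin (n + 1)) R}
    (hS : S ∈ bandToeplitz R m n) {k : Fin (n + 1)} (hk : n < m + k) : S 0 k = 0 := by
  have hlast := hS.2.1 ⟨n - k, by omega⟩
  rw [apply_eq_of_mem_bandToeplitz hS] at hlast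
  simpa [Nat.sub_sub_self (Fin.is_le k)] using hlast

lemma exists_mem_bandToeplitz (g : Fin (n + 1 - m) → R) :
    ∃ S ∈ bandToeplitz R m n, ∀ k, S 0 (Fin.castLE (Nat.sub_le ..) k) = g k := by
  refine ⟨Matrix.of fun p q =>
    if h : p.val ≤ q.val ∧ q.val - p.val < n + 1 - m then g ⟨q - p, h.2⟩ else 0,
    ⟨fun p q => ?_, fun p => ?_, fun p => ?_⟩, fun k => ?_⟩
  · simp
  · simpa using fun _ _ => by omega
  · simp
  · simp

theorem finrank_bandToeplitz [StrongRankCondition R] :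
    Module.finrank R (bandToeplitz R m n) = n + 1 - m := by
  let firstRow : bandToeplitz R m n →ₗ[R] Fin (n + 1 - m) → R :=
    { toFun S k := S.1 0 (Fin.castLE (Nat.sub_le ..) k)
      map_add' _ _ := rfl
      map_smul' _ _ := rfl }
  have hinj : Function.Injective firstRow := fun S T hST => by
    have hrow (k : Fin (n + 1)) : S.1 0 k = T.1 0 k := by
      by_cases hk : n < m + k
      · rw [apply_zero_eq_zero_of_mem_bandToeplitz S.2 hk,
          apply_zero_eq_zero_of_mem_bandToeplitz T.2 hk]
      · exact congrFun hST ⟨k, by omega⟩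
    ext p q
    simp only [apply_eq_of_mem_bandToeplitz S.2 p q, apply_eq_of_mem_bandToeplitz T.2 p q, hrow]
  have hsurj : Function.Surjective firstRow := fun g => by
    obtain ⟨S, hS, hg⟩ := exists_mem_bandToeplitz g
    exact ⟨⟨S, hS⟩, funext hg⟩
  rw [(LinearEquiv.ofBijective firstRow ⟨hinj, hsurj⟩).finrank_eq, Module.finrank_fin_fun]

end BandToeplitz

section HankelPair

variable {R : Type*} [Ring R] {m n : ℕ}

variable (R m n) in
/-- The pairs of off-diagonal blocks pairing two Kronecker blocks skew-symmetrically. Both members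
of such a pair are Hankel matrices with, up to sign, the same symbol of length `m + n`. -/
def hankelPair :
    Submodule R (Matrix (Fin (m + 1)) (Fin n) R × Matrix (Fin (n + 1)) (Fin m) R) where
  carrier := {x | (∀ p q, x.1 (Fin.castSucc p) q = -x.2 (Fin.castSucc q) p) ∧
    ∀ p q, x.1 (Fin.succ p) q = -x.2 (Fin.succ q) p}
  add_mem' := by
    rintro x y ⟨hx, hx'⟩ ⟨hy, hy'⟩
    simp [hx, hx', hy, hy', add_comm]
  zero_mem' := by simp
  smul_mem' := by
    rintro c x ⟨hx, hx'⟩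
    simp [hx, hx']

lemma swap_mem_hankelPair
    {x : Matrix (Fin (m + 1)) (Fin n) R × Matrix (Fin (n + 1)) (Fin m) R}
    (hx : x ∈ hankelPair R m n) : x.swap ∈ hankelPair R n m :=
  ⟨fun p q => neg_eq_iff_eq_neg.1 (hx.1 q p).symm, fun p q => neg_eq_iff_eq_neg.1 (hx.2 q p).symm⟩

lemma fst_eq_zero_of_mem_hankelPair
    {x : Matrix (Fin (m + 1)) (Fin n) R × Matrix (Fin (n + 1)) (Fin m) R}
    (hx : x ∈ hankelPair R m n) (hrow : ∀ p, x.2 0 p = 0) (hlast : ∀ q, x.1 (Fin.last m) q = 0)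
    (p : Fin (m + 1)) (q : Fin n) : x.1 p q = 0 := by
  induction p using Fin.reverseInduction generalizing q with
  | last => exact hlast q
  | cast p ih =>
    cases n with
    | zero => exact q.elim0
    | succ n =>
      cases q using Fin.cases with
      | zero => simp [hx.1, hrow]
      | succ q => rw [hx.1, ← Fin.succ_castSucc, ← hx.2, ih]

lemma eq_zero_of_mem_hankelPair
    {x : Matrix (Fin (m + 1)) (Fin n) R × Matrix (Fin (n + 1)) (Fin m) R}
    (hx : x ∈ hankelPair R m n) (hrow : ∀ p, x.2 0 p = 0) (hlast : ∀ q, x.1 (Fin.last m) q = 0) :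
    x = 0 := by
  have hfst := fst_eq_zero_of_mem_hankelPair hx hrow hlast
  refine Prod.ext (Matrix.ext hfst) (Matrix.ext fun q p => ?_)
  cases q using Fin.cases with
  | zero => exact hrow p
  | succ q => simpa [hfst] using hx.2 p q

/-- The pair of Hankel matrices with symbol `F`. -/
def hankelPairOfSymbol (F : Fin (m + n) → R) : hankelPair R m n :=
  ⟨(Matrix.of fun p q => F ⟨p + q, by omega⟩, Matrix.of fun q p => -F ⟨p + q, by omega⟩),
    fun p q => by simp, fun p q => by simp [add_right_comm, add_assoc]⟩

variable (R m n) in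
/-- A pair of Hankel matrices is determined by the first row of one member and the last row of the
other, which together list the common symbol. -/
def hankelBoundary : hankelPair R m n →ₗ[R] (Fin m → R) × (Fin n → R) where
  toFun x := (fun p => x.1.2 0 p, fun q => x.1.1 (Fin.last m) q)
  map_add' _ _ := rfl
  map_smul' _ _ := rfl

lemma hankelBoundary_injective : Function.Injective (hankelBoundary R m n) :=
  (injective_iff_map_eq_zero _).2 fun x hx => Subtype.ext <|
    eq_zero_of_mem_hankelPair x.2 (congrFun (congrArg Prod.fst hx))
      (congrFun (congrArg Prod.snd hx))

lemma hankelBoundary_ofSymbol (a : Fin m → R) (b : Fin n → R) :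
    hankelBoundary R m n (hankelPairOfSymbol (Fin.append (-a) b)) = (a, b) := by
  refine Prod.ext (funext fun p => ?_) (funext fun q => ?_)
  · exact (congrArg Neg.neg (Fin.append_left (-a) b p)).trans (neg_neg _)
  · exact Fin.append_right (-a) b q

lemma hankelBoundary_surjective : Function.Surjective (hankelBoundary R m n) :=
  fun ⟨a, b⟩ => ⟨_, hankelBoundary_ofSymbol a b⟩

lemma exists_hankelPairOfSymbol_eq (x : hankelPair R m n) : ∃ F, hankelPairOfSymbol F = x :=
  ⟨_, hankelBoundary_injective (hankelBoundary_ofSymbol ..)⟩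

theorem finrank_hankelPair [StrongRankCondition R] :
    Module.finrank R (hankelPair R m n) = m + n := by
  rw [(LinearEquiv.ofBijective _ ⟨hankelBoundary_injective (R := R) (m := m) (n := n),
    hankelBoundary_surjective⟩).finrank_eq]
  simp

lemma eq_zero_of_mk_self_mem_hankelPair [IsAddTorsionFree R]
    {Y : Matrix (Fin (n + 1)) (Fin n) R} (hY : (Y, Y) ∈ hankelPair R n n) : Y = 0 := by
  obtain ⟨F, hF⟩ := exists_hankelPairOfSymbol_eq ⟨_, hY⟩
  have hfst (p : Fin (n + 1)) (q : Fin n) : F ⟨p + q, by omega⟩ = Y p q :=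
    congrArg (fun x : hankelPair R n n => x.1.1 p q) hF
  have hsnd (p : Fin (n + 1)) (q : Fin n) : -F ⟨q + p, by omega⟩ = Y p q :=
    congrArg (fun x : hankelPair R n n => x.1.2 p q) hF
  ext p q
  refine self_eq_neg.1 ?_
  nth_rw 1 [← hfst, ← hsnd]
  simp [add_comm]

end HankelPair

section CrossPair

variable {R : Type*} [AddGroup R] {m n : ℕ}

lemma cross_eq_zero {Y : Matrix (Fin m) (Fin (n + 1)) R} {Z : Matrix (Fin n) (Fin (m + 1)) R}
    (hcastSucc : ∀ p q, Y p (Fin.castSucc q) = -Z q (Fin.castSucc p))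
    (hsucc : ∀ p q, Y p (Fin.succ q) = -Z q (Fin.succ p))
    (hY : ∀ p, Y p 0 = 0) (hZ : ∀ q, Z q (Fin.last m) = 0) : Y = 0 := by
  ext p q
  induction q using Fin.induction generalizing p with
  | zero => exact hY p
  | succ q ih =>
    cases m with
    | zero => exact p.elim0
    | succ m =>
      rw [hsucc]
      cases p using Fin.lastCases with
      | last => simp [hZ]
      | cast p => rw [Fin.succ_castSucc, ← hcastSucc, ih, Matrix.zero_apply, Matrix.zero_apply]

end CrossPair

lemma finrank_comap_of_le_range {K V V' : Type*} [DivisionRing K] [AddCommGroup V] [Module K V]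
    [FiniteDimensional K V] [AddCommGroup V'] [Module K V'] {f : V →ₗ[K] V'} {T : Submodule K V'}
    (hT : T ≤ LinearMap.range f) :
    Module.finrank K (T.comap f) = Module.finrank K T + Module.finrank K (LinearMap.ker f) := by
  have hker : LinearMap.ker f ≤ T.comap f := Submodule.comap_mono bot_le
  rw [← (f.domRestrict (T.comap f)).finrank_range_add_finrank_ker, LinearMap.range_domRestrict,
    LinearMap.ker_domRestrict, Submodule.map_comap_eq_of_le hT,
    (Submodule.comapSubtypeEquivOfLe hker).finrank_eq]

section Stabilizer

variable {n : Type*} [Fintype n]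

lemma congrDeriv_apply (M X : Matrix n n ℂ) : congrDeriv M X = Xᵀ * M + M * X := rfl

lemma mem_stabAlg {A B X : Matrix n n ℂ} :
    X ∈ stabAlg A B ↔ (∃ a b : ℂ, a • A + b • B = congrDeriv A X) ∧
      ∃ c d : ℂ, c • A + d • B = congrDeriv B X := by
  simp only [stabAlg, Submodule.mem_inf, Submodule.mem_comap, Submodule.mem_span_pair]

/-- The Lie algebra of the group of congruences fixing both `A` and `B`, rather than only their
span. -/
noncomputable def isotropyAlg (A B : Matrix n n ℂ) : Submodule ℂ (Matrix n n ℂ) :=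
  LinearMap.ker (congrDeriv A) ⊓ LinearMap.ker (congrDeriv B)

lemma mem_isotropyAlg {A B X : Matrix n n ℂ} :
    X ∈ isotropyAlg A B ↔ congrDeriv A X = 0 ∧ congrDeriv B X = 0 := Iff.rfl

/-- If every infinitesimal change of basis of the pencil is induced by a congruence, the stabilizer
is an extension of `𝔤𝔩₂` by the isotropy algebra. -/
theorem finrank_stabAlg_eq_add_finrank_isotropyAlg {A B : Matrix n n ℂ}
    (hAB : LinearIndependent ℂ ![A, B])
    (hgl : ∀ a b c d : ℂ, ∃ X, congrDeriv A X = a • A + b • B ∧ congrDeriv B X = c • A + d • B) :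
    Module.finrank ℂ (stabAlg A B) = 4 + Module.finrank ℂ (isotropyAlg A B) := by
  set S := Submodule.span ℂ {A, B}
  set φ := (congrDeriv A).prod (congrDeriv B)
  have hstab : stabAlg A B = (S.prod S).comap φ := rfl
  have hker : isotropyAlg A B = LinearMap.ker φ := (LinearMap.ker_prod ..).symm
  have hS : Module.finrank ℂ S = 2 := by
    rw [← Fintype.card_fin 2, ← finrank_span_eq_card hAB, Matrix.range_cons_cons_empty]
  have hSS : Module.finrank ℂ (S.prod S) = 4 := by
    have hsub : S.prod S = LinearMap.range (S.subtype.prodMap S.subtype) := by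
      rw [LinearMap.range_prodMap, S.range_subtype]
    rw [hsub, LinearMap.finrank_range_of_inj (S.injective_subtype.prodMap S.injective_subtype),
      Module.finrank_prod, hS]
  have hrange : S.prod S ≤ LinearMap.range φ := by
    rintro ⟨Y, Z⟩ ⟨hY, hZ⟩
    obtain ⟨a, b, rfl⟩ := Submodule.mem_span_pair.1 hY
    obtain ⟨c, d, rfl⟩ := Submodule.mem_span_pair.1 hZ
    obtain ⟨X, hA, hB⟩ := hgl a b c d
    exact ⟨X, Prod.ext hA hB⟩
  rw [hstab, hker, finrank_comap_of_le_range hrange, hSS]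

variable {m : Type*} [Fintype m]

lemma congrDeriv_reindex (e : m ≃ n) (M X : Matrix m m ℂ) :
    congrDeriv (Matrix.reindex e e M) (Matrix.reindex e e X) =
      Matrix.reindex e e (congrDeriv M X) := by
  simp only [congrDeriv_apply, Matrix.reindex_apply, Matrix.transpose_submatrix,
    Matrix.submatrix_mul_equiv, Matrix.submatrix_add, Pi.add_apply]

lemma map_reindex_stabAlg (e : m ≃ n) (A B : Matrix m m ℂ) :
    (stabAlg A B).map (Matrix.reindexLinearEquiv ℂ ℂ e e).toLinearMap =
      stabAlg (Matrix.reindex e e A) (Matrix.reindex e e B) := by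
  ext Y
  obtain ⟨X, rfl⟩ := (Matrix.reindexLinearEquiv ℂ ℂ e e).surjective Y
  rw [Submodule.mem_map_equiv, LinearEquiv.symm_apply_apply]
  simp only [mem_stabAlg, Matrix.coe_reindexLinearEquiv, congrDeriv_reindex]
  simp only [← Matrix.coe_reindexLinearEquiv ℂ ℂ, ← map_smul, ← map_add,
    (Matrix.reindexLinearEquiv ℂ ℂ e e).injective.eq_iff]

lemma finrank_stabAlg_reindex (e : m ≃ n) (A B : Matrix m m ℂ) :
    Module.finrank ℂ (stabAlg (Matrix.reindex e e A) (Matrix.reindex e e B)) =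
      Module.finrank ℂ (stabAlg A B) := by
  rw [← map_reindex_stabAlg, LinearEquiv.finrank_map_eq]

end Stabilizer

section GraphMatrix

variable {R U V W : Type*} [DecidableEq W]

section NonAssocSemiring

variable [NonAssocSemiring R]

variable (R) in
/-- The matrix with a single nonzero entry, equal to `1`, in each row `u`, in the column `f u`. -/
def graphMatrix (f : U → W) : Matrix U W R := (1 : Matrix W W R).submatrix f id

lemma graphMatrix_mul [Fintype W] (f : U → W) (S : Matrix W V R) :
    graphMatrix R f * S = S.submatrix f id := by
  simpa [graphMatrix] using Matrix.submatrix_mul_equiv (1 : Matrix W W R) S f (.refl W) id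

lemma mul_graphMatrix_apply [Fintype U] {f : U → W} (hf : f.Injective) (P : Matrix V U R)
    (v : V) (u : U) : (P * graphMatrix R f) v (f u) = P v u := by
  classical
  simp [Matrix.mul_apply, graphMatrix, Matrix.one_apply, hf.eq_iff]

lemma mul_graphMatrix_apply_of_notMem_range [Fintype U] {f : U → W} (P : Matrix V U R) (v : V)
    {w : W} (hw : w ∉ Set.range f) : (P * graphMatrix R f) v w = 0 := by
  simp only [Set.mem_range, not_exists] at hw
  simp [Matrix.mul_apply, graphMatrix, hw]

lemma graphMatrix_sigmaMap {ι : Type*} [DecidableEq ι] {α β : ι → Type*}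
    [∀ i, DecidableEq (β i)] (f : ∀ i, α i → β i) :
    graphMatrix R (Sigma.map id f) = Matrix.blockDiagonal' fun i => graphMatrix R (f i) := by
  ext ⟨i, u⟩ ⟨j, w⟩
  by_cases hij : i = j
  · subst hij
    simp [graphMatrix, Matrix.one_apply, Sigma.map]
  · simp [graphMatrix, Matrix.one_apply, Sigma.map, hij, Matrix.blockDiagonal'_apply]

end NonAssocSemiring

section NonAssocRing

variable [NonAssocRing R] {f : U → W}

lemma graphMatrix_mul_skew_iff [Fintype W] {M : Matrix W U R} :
    (graphMatrix R f * M)ᵀ + graphMatrix R f * M = 0 ↔ ∀ u u', M (f u) u' = -M (f u') u := by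
  rw [graphMatrix_mul, ← Matrix.ext_iff]
  exact forall₂_congr fun u u' => add_eq_zero_iff_eq_neg'

lemma mul_graphMatrix_add_graphMatrix_mul_eq_zero_iff [Fintype U] [Fintype W]
    (hf : f.Injective) {P : Matrix U U R} {S : Matrix W W R} :
    P * graphMatrix R f + graphMatrix R f * S = 0 ↔
      (∀ u u', S (f u) (f u') = -P u u') ∧ ∀ u, ∀ w ∉ Set.range f, S (f u) w = 0 := by
  rw [graphMatrix_mul]
  constructor
  · refine fun h => ⟨fun u u' => ?_, fun u w hw => ?_⟩
    · have hentry := congrFun₂ h u (f u')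
      rw [Matrix.add_apply, mul_graphMatrix_apply hf] at hentry
      exact eq_neg_of_add_eq_zero_right hentry
    · have hentry := congrFun₂ h u w
      rwa [Matrix.add_apply, mul_graphMatrix_apply_of_notMem_range _ _ hw, zero_add] at hentry
  · rintro ⟨himage, hcompl⟩
    ext u w
    rw [Matrix.add_apply]
    by_cases hw : w ∈ Set.range f
    · obtain ⟨u', rfl⟩ := hw
      rw [mul_graphMatrix_apply hf]
      exact add_eq_zero_iff_eq_neg'.2 (himage u u')
    · rw [mul_graphMatrix_apply_of_notMem_range _ _ hw, zero_add]
      exact hcompl u w hw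

lemma mul_graphMatrix_skew_iff [Fintype U] (hf : f.Injective) {Q : Matrix W U R} :
    (Q * graphMatrix R f)ᵀ + Q * graphMatrix R f = 0 ↔
      (∀ u u', Q (f u') u = -Q (f u) u') ∧ ∀ u, ∀ w ∉ Set.range f, Q w u = 0 := by
  constructor
  · refine fun h => ⟨fun u u' => ?_, fun u w hw => ?_⟩
    · have hentry := congrFun₂ h (f u') (f u)
      rw [Matrix.add_apply, Matrix.transpose_apply, mul_graphMatrix_apply hf,
        mul_graphMatrix_apply hf] at hentry
      exact eq_neg_of_add_eq_zero_right hentry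
    · have hentry := congrFun₂ h w (f u)
      rwa [Matrix.add_apply, Matrix.transpose_apply,
        mul_graphMatrix_apply_of_notMem_range _ _ hw, zero_add,
        mul_graphMatrix_apply hf] at hentry
  · rintro ⟨himage, hcompl⟩
    have hskew (u : U) (w : W) : (Q * graphMatrix R f) (f u) w = -Q w u := by
      by_cases hw : w ∈ Set.range f
      · obtain ⟨u', rfl⟩ := hw
        rw [mul_graphMatrix_apply hf]
        exact himage u' u
      · rw [mul_graphMatrix_apply_of_notMem_range _ _ hw, hcompl u w hw, neg_zero]
    ext w w'
    rw [Matrix.add_apply, Matrix.transpose_apply, Matrix.zero_apply]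
    by_cases hw : w ∈ Set.range f
    · obtain ⟨u, rfl⟩ := hw
      rw [hskew, mul_graphMatrix_apply hf, add_neg_cancel]
    · rw [mul_graphMatrix_apply_of_notMem_range _ _ hw, zero_add]
      by_cases hw' : w' ∈ Set.range f
      · obtain ⟨u, rfl⟩ := hw'
        rw [mul_graphMatrix_apply hf, hcompl u w hw]
      · exact mul_graphMatrix_apply_of_notMem_range _ _ hw'

end NonAssocRing

end GraphMatrix

section Pairing

variable {R U W : Type*}

/-- The symmetric bilinear form on the sum of two vector spaces which vanishes on each of them and
pairs them through `L`. -/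
def pairing [Zero R] (L : Matrix U W R) : Matrix (U ⊕ W) (U ⊕ W) R := Matrix.fromBlocks 0 L Lᵀ 0

lemma pairing_add [AddZeroClass R] (L M : Matrix U W R) :
    pairing (L + M) = pairing L + pairing M := by
  simp [pairing, Matrix.fromBlocks_add]

lemma pairing_smul {S : Type*} [Zero R] [SMulZeroClass S R] (c : S) (L : Matrix U W R) :
    pairing (c • L) = c • pairing L := by
  ext (u | w) (u' | w') <;> simp [pairing]

/-- The entrywise equations for a matrix to annihilate the form pairing `u` with `f u`. -/
structure IsSkewForPairing [Zero R] [Neg R] (f : U → W) (X : Matrix (U ⊕ W) (U ⊕ W) R) :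
    Prop where
  lowerLeft u u' : X (.inr (f u)) (.inl u') = -X (.inr (f u')) (.inl u)
  diagonal u u' : X (.inr (f u)) (.inr (f u')) = -X (.inl u') (.inl u)
  lowerRight u w : w ∉ Set.range f → X (.inr (f u)) (.inr w) = 0
  upperRight u u' : X (.inl u) (.inr (f u')) = -X (.inl u') (.inr (f u))
  upperRight_zero u w : w ∉ Set.range f → X (.inl u) (.inr w) = 0

variable [Fintype U] [Fintype W]

lemma congrDeriv_pairing (L : Matrix U W ℂ) (P : Matrix U U ℂ) (Q : Matrix U W ℂ)
    (R : Matrix W U ℂ) (S : Matrix W W ℂ) :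
    congrDeriv (pairing L) (Matrix.fromBlocks P Q R S) =
      Matrix.fromBlocks ((L * R)ᵀ + L * R) (Pᵀ * L + L * S) (Pᵀ * L + L * S)ᵀ
        ((Qᵀ * L)ᵀ + Qᵀ * L) := by
  simp [congrDeriv_apply, pairing, Matrix.fromBlocks_transpose, Matrix.fromBlocks_multiply,
    Matrix.fromBlocks_add, add_comm]

lemma congrDeriv_pairing_diagonal (L : Matrix U W ℂ) (D : Matrix U U ℂ) (S : Matrix W W ℂ) :
    congrDeriv (pairing L) (Matrix.fromBlocks Dᵀ 0 0 S) = pairing (D * L + L * S) := by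
  rw [congrDeriv_pairing]
  simp [pairing]

lemma congrDeriv_pairing_graphMatrix_eq_zero_iff [DecidableEq W] {f : U → W} (hf : f.Injective)
    {X : Matrix (U ⊕ W) (U ⊕ W) ℂ} :
    congrDeriv (pairing (graphMatrix ℂ f)) X = 0 ↔ IsSkewForPairing f X := by
  obtain ⟨P, Q, R, S, rfl⟩ : ∃ P Q R S, X = Matrix.fromBlocks P Q R S :=
    ⟨_, _, _, _, X.fromBlocks_toBlocks.symm⟩
  rw [congrDeriv_pairing, ← Matrix.fromBlocks_zero, Matrix.fromBlocks_inj,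
    graphMatrix_mul_skew_iff, mul_graphMatrix_skew_iff hf]
  constructor
  · rintro ⟨hR, hPS, -, hQ, hQ'⟩
    obtain ⟨hS, hS'⟩ := (mul_graphMatrix_add_graphMatrix_mul_eq_zero_iff hf).1 hPS
    exact ⟨hR, hS, hS', hQ, hQ'⟩
  · rintro ⟨hR, hS, hS', hQ, hQ'⟩
    have hPS : Pᵀ * graphMatrix ℂ f + graphMatrix ℂ f * S = 0 :=
      (mul_graphMatrix_add_graphMatrix_mul_eq_zero_iff hf).2 ⟨hS, hS'⟩
    exact ⟨hR, hPS, by rw [hPS, Matrix.transpose_zero], hQ, hQ'⟩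

end Pairing

section GeneralLinear

variable {R : Type*}

section KroneckerBlock

variable [NonAssocSemiring R]

variable (R) in
/-- The coefficient of the first variable in a Kronecker block. -/
abbrev kroneckerBlockA (m : ℕ) : Matrix (Fin m) (Fin (m + 1)) R := graphMatrix R Fin.castSucc

variable (R) in
/-- The coefficient of the second variable in a Kronecker block. -/
abbrev kroneckerBlockB (m : ℕ) : Matrix (Fin m) (Fin (m + 1)) R := graphMatrix R Fin.succ

lemma kroneckerBlockA_apply {m : ℕ} (p : Fin m) (q : Fin (m + 1)) :
    kroneckerBlockA R m p q = if (p : ℕ) = q then 1 else 0 := by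
  simp [kroneckerBlockA, graphMatrix, Matrix.one_apply, Fin.ext_iff]

lemma kroneckerBlockB_apply {m : ℕ} (p : Fin m) (q : Fin (m + 1)) :
    kroneckerBlockB R m p q = if (p : ℕ) + 1 = q then 1 else 0 := by
  simp [kroneckerBlockB, graphMatrix, Matrix.one_apply, Fin.ext_iff]

end KroneckerBlock

variable [CommRing R]

/-- The action of `[[a, b], [c, d]] ∈ 𝔤𝔩₂` on binary forms of degree `m`, in the monomial basis and
up to a scalar matrix; it acts on the columns of a Kronecker block. -/
def colAction (m : ℕ) (a b c d : R) : Matrix (Fin (m + 1)) (Fin (m + 1)) R :=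
  Matrix.of fun p q => if (q : ℕ) = p then (d - a) * p else if (q : ℕ) = p + 1 then b * (m - p)
    else if (p : ℕ) = q + 1 then c * p else 0

/-- The dual of the action of `[[a, b], [c, d]] ∈ 𝔤𝔩₂` on binary forms of degree `m - 1`, in the
monomial basis and up to a scalar matrix; it acts on the rows of a Kronecker block. -/
def rowAction (m : ℕ) (a b c d : R) : Matrix (Fin m) (Fin m) R :=
  Matrix.of fun p q => if (q : ℕ) = p then a - (d - a) * p
    else if (q : ℕ) = p + 1 then b - b * (m - p) else if (p : ℕ) = q + 1 then -c * p else 0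

variable (m : ℕ) (a b c d : R)

lemma rowAction_mul_kroneckerBlockA_add :
    rowAction m a b c d * kroneckerBlockA R m + kroneckerBlockA R m * colAction m a b c d =
      a • kroneckerBlockA R m + b • kroneckerBlockB R m := by
  ext p q
  simp only [Matrix.add_apply, Matrix.smul_apply, smul_eq_mul, kroneckerBlockA_apply,
    kroneckerBlockB_apply]
  rw [graphMatrix_mul]
  obtain ⟨p, hp⟩ := p
  cases q using Fin.lastCases with
  | last =>
    rw [mul_graphMatrix_apply_of_notMem_range _ _ (by simp)]
    simp only [colAction, Matrix.submatrix_apply, Matrix.of_apply, id_eq, Fin.castSucc_mk,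
      Fin.val_last]
    split_ifs <;> first | omega | (subst_vars; push_cast; ring)
  | cast q =>
    obtain ⟨q, hq⟩ := q
    rw [mul_graphMatrix_apply (Fin.castSucc_injective m)]
    simp only [colAction, rowAction, Matrix.submatrix_apply, Matrix.of_apply, id_eq,
      Fin.castSucc_mk]
    split_ifs <;> first | omega | (subst_vars; push_cast; ring)

lemma rowAction_mul_kroneckerBlockB_add :
    rowAction m a b c d * kroneckerBlockB R m + kroneckerBlockB R m * colAction m a b c d =
      c • kroneckerBlockA R m + d • kroneckerBlockB R m := by
  ext p q
  simp only [Matrix.add_apply, Matrix.smul_apply, smul_eq_mul, kroneckerBlockA_apply,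
    kroneckerBlockB_apply]
  rw [graphMatrix_mul]
  obtain ⟨p, hp⟩ := p
  cases q using Fin.cases with
  | zero =>
    rw [mul_graphMatrix_apply_of_notMem_range _ _ (by simp)]
    obtain _ | p := p <;> simp [colAction]
  | succ q =>
    obtain ⟨q, hq⟩ := q
    rw [mul_graphMatrix_apply (Fin.succ_injective m)]
    simp only [colAction, rowAction, Matrix.submatrix_apply, Matrix.of_apply, id_eq,
      Fin.succ_mk]
    split_ifs <;> first | omega | (subst_vars; push_cast; ring)

end GeneralLinear

section Kronecker

variable {R ι : Type*} (r : ι → ℕ)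

/-- The row indices of a direct sum of Kronecker blocks `L_{r i}`, of size `r i × (r i + 1)`. -/
abbrev KroneckerRow := Σ i, Fin (r i)

/-- The column indices of a direct sum of Kronecker blocks `L_{r i}`, of size
`r i × (r i + 1)`. -/
abbrev KroneckerCol := Σ i, Fin (r i + 1)

variable {r}

/-- The position of the first nonzero entry in a row of a Kronecker block. -/
def KroneckerRow.castSucc : KroneckerRow r → KroneckerCol r := Sigma.map id fun _ => Fin.castSucc

/-- The position of the second nonzero entry in a row of a Kronecker block. -/
def KroneckerRow.succ : KroneckerRow r → KroneckerCol r := Sigma.map id fun _ => Fin.succ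

lemma KroneckerRow.castSucc_injective : (castSucc : KroneckerRow r → _).Injective :=
  Function.injective_id.sigma_map fun _ => Fin.castSucc_injective _

lemma KroneckerRow.succ_injective : (succ : KroneckerRow r → _).Injective :=
  Function.injective_id.sigma_map fun _ => Fin.succ_injective _

lemma KroneckerRow.notMem_range_castSucc {w : KroneckerCol r} :
    w ∉ Set.range castSucc ↔ ∃ i, w = ⟨i, Fin.last (r i)⟩ := by
  obtain ⟨i, p⟩ := w
  cases p using Fin.lastCases with
  | last => simp [castSucc, Sigma.map, Fin.castSucc_ne_last]
  | cast p => simp [castSucc, Sigma.map]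

lemma KroneckerRow.notMem_range_succ {w : KroneckerCol r} :
    w ∉ Set.range succ ↔ ∃ i, w = ⟨i, 0⟩ := by
  obtain ⟨i, p⟩ := w
  cases p using Fin.cases with
  | zero => simp [succ, Sigma.map]
  | succ p => simp [succ, Sigma.map]

variable (R r) in
/-- The coefficient of the first variable in a direct sum of Kronecker blocks. -/
abbrev kroneckerA [NonAssocSemiring R] [DecidableEq ι] :
    Matrix (KroneckerRow r) (KroneckerCol r) R :=
  graphMatrix R KroneckerRow.castSucc

variable (R r) in
/-- The coefficient of the second variable in a direct sum of Kronecker blocks. -/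
abbrev kroneckerB [NonAssocSemiring R] [DecidableEq ι] :
    Matrix (KroneckerRow r) (KroneckerCol r) R :=
  graphMatrix R KroneckerRow.succ

variable (R r) in
lemma kroneckerA_eq_blockDiagonal' [NonAssocSemiring R] [DecidableEq ι] :
    kroneckerA R r = Matrix.blockDiagonal' fun i => kroneckerBlockA R (r i) :=
  graphMatrix_sigmaMap _

variable (R r) in
lemma kroneckerB_eq_blockDiagonal' [NonAssocSemiring R] [DecidableEq ι] :
    kroneckerB R r = Matrix.blockDiagonal' fun i => kroneckerBlockB R (r i) :=
  graphMatrix_sigmaMap _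

lemma kroneckerA_apply [NonAssocSemiring R] [DecidableEq ι] (u : KroneckerRow r)
    (w : KroneckerCol r) :
    kroneckerA R r u w = if u.1 = w.1 ∧ (w.2 : ℕ) = u.2 then 1 else 0 := by
  obtain ⟨i, p⟩ := u
  obtain ⟨j, q⟩ := w
  by_cases hij : i = j
  · subst hij
    simp [graphMatrix, KroneckerRow.castSucc, Sigma.map, Matrix.one_apply, Fin.ext_iff, eq_comm]
  · simp [graphMatrix, KroneckerRow.castSucc, Sigma.map, Matrix.one_apply, hij]

lemma kroneckerB_apply [NonAssocSemiring R] [DecidableEq ι] (u : KroneckerRow r)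
    (w : KroneckerCol r) :
    kroneckerB R r u w = if u.1 = w.1 ∧ (w.2 : ℕ) = u.2 + 1 then 1 else 0 := by
  obtain ⟨i, p⟩ := u
  obtain ⟨j, q⟩ := w
  by_cases hij : i = j
  · subst hij
    simp [graphMatrix, KroneckerRow.succ, Sigma.map, Matrix.one_apply, Fin.ext_iff, eq_comm]
  · simp [graphMatrix, KroneckerRow.succ, Sigma.map, Matrix.one_apply, hij]

section Isotropy

variable [Ring R]

variable (X : Matrix (KroneckerRow r ⊕ KroneckerCol r) (KroneckerRow r ⊕ KroneckerCol r) R)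

/-- The block of `X` between the columns of the `i`-th and of the `j`-th Kronecker block. -/
def colColBlock (i j : ι) : Matrix (Fin (r i + 1)) (Fin (r j + 1)) R :=
  Matrix.of fun p q => X (.inr ⟨i, p⟩) (.inr ⟨j, q⟩)

/-- The block of `X` between the columns of the `i`-th and the rows of the `j`-th Kronecker
block. -/
def colRowBlock (i j : ι) : Matrix (Fin (r i + 1)) (Fin (r j)) R :=
  Matrix.of fun p q => X (.inr ⟨i, p⟩) (.inl ⟨j, q⟩)

/-- The explicit form of the infinitesimal isotropies of a direct sum of Kronecker pencils. -/
structure IsKroneckerIsotropy : Prop where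
  colCol i j : colColBlock X i j ∈ bandToeplitz R (r i) (r j)
  colRow i j : (colRowBlock X i j, colRowBlock X j i) ∈ hankelPair R (r i) (r j)
  rowRow u u' : X (.inl u) (.inl u') = -X (.inr u'.castSucc) (.inr u.castSucc)
  rowCol u w : X (.inl u) (.inr w) = 0

variable {X}

lemma IsSkewForPairing.isKroneckerIsotropy (hcast : IsSkewForPairing KroneckerRow.castSucc X)
    (hsucc : IsSkewForPairing KroneckerRow.succ X) : IsKroneckerIsotropy X := by
  refine ⟨fun i j => ⟨fun p q => ?_, fun p => ?_, fun p => ?_⟩, fun i j => ⟨fun p q => ?_,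
    fun p q => ?_⟩, fun u u' => ?_, ?_⟩
  · exact (hsucc.diagonal ⟨i, p⟩ ⟨j, q⟩).trans (hcast.diagonal ⟨i, p⟩ ⟨j, q⟩).symm
  · exact hcast.lowerRight ⟨i, p⟩ _ (KroneckerRow.notMem_range_castSucc.2 ⟨j, rfl⟩)
  · exact hsucc.lowerRight ⟨i, p⟩ _ (KroneckerRow.notMem_range_succ.2 ⟨j, rfl⟩)
  · exact hcast.lowerLeft ⟨i, p⟩ ⟨j, q⟩
  · exact hsucc.lowerLeft ⟨i, p⟩ ⟨j, q⟩
  · exact neg_eq_iff_eq_neg.1 (hcast.diagonal u' u).symm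
  · rintro ⟨i, p⟩ ⟨j, q⟩
    let rowColBlock (i j : ι) : Matrix (Fin (r i)) (Fin (r j + 1)) R :=
      Matrix.of fun p q => X (.inl ⟨i, p⟩) (.inr ⟨j, q⟩)
    have hzero : rowColBlock i j = 0 := cross_eq_zero (Z := rowColBlock j i)
      (fun p q => hcast.upperRight ⟨i, p⟩ ⟨j, q⟩) (fun p q => hsucc.upperRight ⟨i, p⟩ ⟨j, q⟩)
      (fun p => hsucc.upperRight_zero ⟨i, p⟩ _ (KroneckerRow.notMem_range_succ.2 ⟨j, rfl⟩))
      fun q => hcast.upperRight_zero ⟨j, q⟩ _ (KroneckerRow.notMem_range_castSucc.2 ⟨i, rfl⟩)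
    exact congrFun₂ hzero p q

lemma IsKroneckerIsotropy.isSkewForPairing_castSucc (hX : IsKroneckerIsotropy X) :
    IsSkewForPairing KroneckerRow.castSucc X where
  lowerLeft u u' := (hX.colRow u.1 u'.1).1 u.2 u'.2
  diagonal u u' := neg_eq_iff_eq_neg.1 (hX.rowRow u' u).symm
  lowerRight u w hw := by
    obtain ⟨j, rfl⟩ := KroneckerRow.notMem_range_castSucc.1 hw
    exact (hX.colCol u.1 j).2.1 u.2
  upperRight u u' := by simp only [hX.rowCol, neg_zero]
  upperRight_zero u w _ := hX.rowCol u w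

lemma IsKroneckerIsotropy.isSkewForPairing_succ (hX : IsKroneckerIsotropy X) :
    IsSkewForPairing KroneckerRow.succ X where
  lowerLeft u u' := (hX.colRow u.1 u'.1).2 u.2 u'.2
  diagonal u u' := ((hX.colCol u.1 u'.1).1 u.2 u'.2).trans <|
    neg_eq_iff_eq_neg.1 (hX.rowRow u' u).symm
  lowerRight u w hw := by
    obtain ⟨j, rfl⟩ := KroneckerRow.notMem_range_succ.1 hw
    exact (hX.colCol u.1 j).2.2 u.2
  upperRight u u' := by simp only [hX.rowCol, neg_zero]
  upperRight_zero u w _ := hX.rowCol u w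

lemma IsKroneckerIsotropy.colRowBlock_self [IsAddTorsionFree R]
    (hX : IsKroneckerIsotropy X) (i : ι) : colRowBlock X i i = 0 :=
  eq_zero_of_mk_self_mem_hankelPair (hX.colRow i i)

lemma IsKroneckerIsotropy.eq_zero [IsAddTorsionFree R] [LinearOrder ι]
    (hX : IsKroneckerIsotropy X)
    (hcolCol : ∀ i j, colColBlock X i j = 0)
    (hcolRow : ∀ i j, i < j → colRowBlock X i j = 0 ∧ colRowBlock X j i = 0) : X = 0 := by
  have hcolCol' (w w') : X (.inr w) (.inr w') = 0 := congrFun₂ (hcolCol w.1 w'.1) w.2 w'.2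
  have hcolRow' (i j) : colRowBlock X i j = 0 := by
    rcases lt_trichotomy i j with hij | rfl | hij
    · exact (hcolRow i j hij).1
    · exact hX.colRowBlock_self i
    · exact (hcolRow j i hij).2
  ext (u | w) (u' | w')
  · rw [hX.rowRow, hcolCol', neg_zero, Matrix.zero_apply]
  · exact hX.rowCol u w'
  · exact congrFun₂ (hcolRow' w.1 u'.1) w.2 u'.2
  · exact hcolCol' w w'

/-- The infinitesimal isotropy with prescribed blocks. -/
def kroneckerIsotropyOfBlocks [LinearOrder ι]
    (T : ∀ ij : ι × ι, bandToeplitz R (r ij.1) (r ij.2))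
    (H : ∀ ij : {ij : ι × ι // ij.1 < ij.2}, hankelPair R (r ij.1.1) (r ij.1.2)) :
    Matrix (KroneckerRow r ⊕ KroneckerCol r) (KroneckerRow r ⊕ KroneckerCol r) R :=
  let S (w w' : KroneckerCol r) : R := (T (w.1, w'.1)).1 w.2 w'.2
  Matrix.fromBlocks (Matrix.of fun u u' => -S u'.castSucc u.castSucc) 0
    (Matrix.of fun w u =>
      if hlt : w.1 < u.1 then (H ⟨(w.1, u.1), hlt⟩).1.1 w.2 u.2
      else if hgt : u.1 < w.1 then (H ⟨(u.1, w.1), hgt⟩).1.2 w.2 u.2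
      else 0)
    (Matrix.of S)

section OfBlocks

variable [LinearOrder ι] (T : ∀ ij : ι × ι, bandToeplitz R (r ij.1) (r ij.2))
  (H : ∀ ij : {ij : ι × ι // ij.1 < ij.2}, hankelPair R (r ij.1.1) (r ij.1.2))

lemma colRowBlock_ofBlocks_of_lt {i j : ι} (hij : i < j) :
    (colRowBlock (kroneckerIsotropyOfBlocks T H) i j,
      colRowBlock (kroneckerIsotropyOfBlocks T H) j i) = (H ⟨(i, j), hij⟩).1 := by
  refine Prod.ext (Matrix.ext fun p q => ?_) (Matrix.ext fun q p => ?_)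
  · exact dif_pos hij
  · exact (dif_neg hij.asymm).trans (dif_pos hij)

lemma isKroneckerIsotropy_ofBlocks : IsKroneckerIsotropy (kroneckerIsotropyOfBlocks T H) where
  colCol i j := (T (i, j)).2
  colRow i j := by
    rcases lt_trichotomy i j with hij | rfl | hij
    · rw [colRowBlock_ofBlocks_of_lt T H hij]
      exact (H ⟨(i, j), hij⟩).2
    · have hself : colRowBlock (kroneckerIsotropyOfBlocks T H) i i = 0 := by
        ext p q
        exact (dif_neg (lt_irrefl i)).trans (dif_neg (lt_irrefl i))
      rw [hself]
      exact zero_mem _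
    · refine swap_mem_hankelPair (x := (_, _)) ?_
      exact (colRowBlock_ofBlocks_of_lt T H hij).symm ▸ (H ⟨(j, i), hij⟩).2
  rowRow _ _ := rfl
  rowCol _ _ := rfl

end OfBlocks

end Isotropy

section IsotropyAlg

variable [Fintype ι]

variable (r) in
/-- The isotropy algebra of a direct sum of Kronecker pencils. -/
noncomputable abbrev kroneckerIsotropyAlg [DecidableEq ι] :
    Submodule ℂ (Matrix (KroneckerRow r ⊕ KroneckerCol r) (KroneckerRow r ⊕ KroneckerCol r) ℂ) :=
  isotropyAlg (pairing (kroneckerA ℂ r)) (pairing (kroneckerB ℂ r))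

lemma mem_kroneckerIsotropyAlg [DecidableEq ι]
    {X : Matrix (KroneckerRow r ⊕ KroneckerCol r) (KroneckerRow r ⊕ KroneckerCol r) ℂ} :
    X ∈ kroneckerIsotropyAlg r ↔ IsKroneckerIsotropy X := by
  rw [mem_isotropyAlg, congrDeriv_pairing_graphMatrix_eq_zero_iff KroneckerRow.castSucc_injective,
    congrDeriv_pairing_graphMatrix_eq_zero_iff KroneckerRow.succ_injective]
  exact ⟨fun hX => hX.1.isKroneckerIsotropy hX.2,
    fun hX => ⟨hX.isSkewForPairing_castSucc, hX.isSkewForPairing_succ⟩⟩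

variable [LinearOrder ι]

variable (r) in
/-- The blocks which determine an infinitesimal isotropy of a direct sum of Kronecker pencils. -/
def isotropyBlocks : kroneckerIsotropyAlg r →ₗ[ℂ]
    (∀ ij : ι × ι, bandToeplitz ℂ (r ij.1) (r ij.2)) ×
      ∀ ij : {ij : ι × ι // ij.1 < ij.2}, hankelPair ℂ (r ij.1.1) (r ij.1.2) where
  toFun X := (fun ij => ⟨colColBlock X.1 ij.1 ij.2, (mem_kroneckerIsotropyAlg.1 X.2).colCol _ _⟩,
    fun ij => ⟨(colRowBlock X.1 ij.1.1 ij.1.2, colRowBlock X.1 ij.1.2 ij.1.1),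
      (mem_kroneckerIsotropyAlg.1 X.2).colRow _ _⟩)
  map_add' _ _ := rfl
  map_smul' _ _ := rfl

lemma isotropyBlocks_injective : Function.Injective (isotropyBlocks r) := by
  refine (injective_iff_map_eq_zero _).2 fun X hX => Subtype.ext ?_
  refine (mem_kroneckerIsotropyAlg.1 X.2).eq_zero (fun i j => ?_) fun i j hij => ?_
  · exact congrArg Subtype.val (congrFun (congrArg Prod.fst hX) (i, j))
  · exact Prod.mk.inj <|
      congrArg Subtype.val (congrFun (congrArg Prod.snd hX) ⟨(i, j), hij⟩)

lemma isotropyBlocks_surjective : Function.Surjective (isotropyBlocks r) := fun ⟨T, H⟩ =>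
  ⟨⟨kroneckerIsotropyOfBlocks T H,
    mem_kroneckerIsotropyAlg.2 (isKroneckerIsotropy_ofBlocks T H)⟩,
    Prod.ext rfl (funext fun ij => Subtype.ext (colRowBlock_ofBlocks_of_lt T H ij.2))⟩

theorem finrank_kroneckerIsotropyAlg :
    Module.finrank ℂ (kroneckerIsotropyAlg r) =
      ∑ ij : ι × ι, (r ij.2 + 1 - r ij.1) + ∑ ij : ι × ι with ij.1 < ij.2, (r ij.1 + r ij.2) := by
  rw [(LinearEquiv.ofBijective _
    ⟨isotropyBlocks_injective (r := r), isotropyBlocks_surjective⟩).finrank_eq,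
    Module.finrank_prod, Module.finrank_pi_fintype, Module.finrank_pi_fintype]
  simp only [finrank_bandToeplitz, finrank_hankelPair]
  rw [Finset.sum_subtype _ (fun ij => Finset.mem_filter_univ ij)]

end IsotropyAlg

lemma exists_mul_kronecker_add_eq [CommRing R] [DecidableEq ι] [Fintype ι]
    (a b c d : R) :
    ∃ (D : Matrix (KroneckerRow r) (KroneckerRow r) R)
      (S : Matrix (KroneckerCol r) (KroneckerCol r) R),
      D * kroneckerA R r + kroneckerA R r * S = a • kroneckerA R r + b • kroneckerB R r ∧
      D * kroneckerB R r + kroneckerB R r * S = c • kroneckerA R r + d • kroneckerB R r := by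
  refine ⟨Matrix.blockDiagonal' fun i => rowAction (r i) a b c d,
    Matrix.blockDiagonal' fun i => colAction (r i) a b c d, ?_, ?_⟩
  all_goals
    rw [kroneckerA_eq_blockDiagonal', kroneckerB_eq_blockDiagonal',
      ← Matrix.blockDiagonal'_mul, ← Matrix.blockDiagonal'_mul, ← Matrix.blockDiagonal'_add,
      ← Matrix.blockDiagonal'_smul, ← Matrix.blockDiagonal'_smul, ← Matrix.blockDiagonal'_add]
    refine congrArg Matrix.blockDiagonal' (funext fun i => ?_)
  · exact rowAction_mul_kroneckerBlockA_add ..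
  · exact rowAction_mul_kroneckerBlockB_add ..

lemma exists_congrDeriv_pairing_kronecker [DecidableEq ι] [Fintype ι] (a b c d : ℂ) :
    ∃ X, congrDeriv (pairing (kroneckerA ℂ r)) X =
        a • pairing (kroneckerA ℂ r) + b • pairing (kroneckerB ℂ r) ∧
      congrDeriv (pairing (kroneckerB ℂ r)) X =
        c • pairing (kroneckerA ℂ r) + d • pairing (kroneckerB ℂ r) := by
  obtain ⟨D, S, hA, hB⟩ := exists_mul_kronecker_add_eq (r := r) a b c d
  refine ⟨Matrix.fromBlocks Dᵀ 0 0 S, ?_, ?_⟩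
  · rw [congrDeriv_pairing_diagonal, hA, pairing_add, pairing_smul, pairing_smul]
  · rw [congrDeriv_pairing_diagonal, hB, pairing_add, pairing_smul, pairing_smul]

lemma linearIndependent_pairing_kronecker [Ring R] [DecidableEq ι] {i : ι} (hi : 0 < r i) :
    LinearIndependent R ![pairing (kroneckerA R r), pairing (kroneckerB R r)] := by
  refine LinearIndependent.pair_iff.2 fun a b hab => ?_
  have hentry (q : Fin (r i + 1)) := congrFun₂ hab (.inl ⟨i, ⟨0, hi⟩⟩) (.inr ⟨i, q⟩)
  have ha := hentry 0
  have hb := hentry ⟨1, by omega⟩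
  constructor
  · simpa [pairing, kroneckerA_apply, kroneckerB_apply] using ha
  · simpa [pairing, kroneckerA_apply, kroneckerB_apply] using hb

end Kronecker

section CanonicalPencil

variable {h : ℕ} (rr : Fin h → ℕ)

/-- In the block `i` of the canonical pencil, the indices `p < rᵢ` are the rows and the indices
`p ≥ rᵢ` the columns of a Kronecker block. -/
def pencilIdxEquiv : KroneckerRow rr ⊕ KroneckerCol rr ≃ PencilIdx h rr :=
  (Equiv.sigmaSumDistrib _ _).symm.trans <| Equiv.sigmaCongrRight fun i =>
    finSumFinEquiv.trans <| finCongr (by omega)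

@[simp]
lemma pencilIdxEquiv_inl (u : KroneckerRow rr) :
    pencilIdxEquiv rr (.inl u) = ⟨u.1, u.2, by omega⟩ := rfl

@[simp]
lemma pencilIdxEquiv_inr (w : KroneckerCol rr) :
    pencilIdxEquiv rr (.inr w) = ⟨w.1, rr w.1 + w.2, by omega⟩ := rfl

lemma canA_eq_reindex :
    canA h rr = Matrix.reindex (pencilIdxEquiv rr) (pencilIdxEquiv rr)
      (pairing (kroneckerA ℂ rr)) := by
  refine (Equiv.symm_apply_eq (Matrix.reindex _ _)).1 ?_
  ext (u | w) (u' | w') <;>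
    simp only [Matrix.reindex_symm, Matrix.reindex_apply, Equiv.symm_symm, Matrix.submatrix_apply,
      canA, pairing, Matrix.of_apply, pencilIdxEquiv_inl, pencilIdxEquiv_inr,
      Matrix.fromBlocks_apply₁₁, Matrix.fromBlocks_apply₁₂, Matrix.fromBlocks_apply₂₁,
      Matrix.fromBlocks_apply₂₂, Matrix.transpose_apply, Matrix.zero_apply, kroneckerA_apply] <;>
    grind

lemma canB_eq_reindex :
    canB h rr = Matrix.reindex (pencilIdxEquiv rr) (pencilIdxEquiv rr)
      (pairing (kroneckerB ℂ rr)) := by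
  refine (Equiv.symm_apply_eq (Matrix.reindex _ _)).1 ?_
  ext (u | w) (u' | w') <;>
    simp only [Matrix.reindex_symm, Matrix.reindex_apply, Equiv.symm_symm, Matrix.submatrix_apply,
      canB, pairing, Matrix.of_apply, pencilIdxEquiv_inl, pencilIdxEquiv_inr,
      Matrix.fromBlocks_apply₁₁, Matrix.fromBlocks_apply₁₂, Matrix.fromBlocks_apply₂₁,
      Matrix.fromBlocks_apply₂₂, Matrix.transpose_apply, Matrix.zero_apply, kroneckerB_apply] <;>
    grind

end CanonicalPencil

section Counting

lemma sum_prod_eq_sum_diag_add_sum_lt {ι M : Type*} [Fintype ι] [LinearOrder ι] [AddCommMonoid M]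
    (f : ι × ι → M) :
    ∑ ij, f ij = ∑ i, f (i, i) + ∑ ij : ι × ι with ij.1 < ij.2, (f ij + f ij.swap) := by
  have hgt : ∑ ij : ι × ι with ij.1 < ij.2, f ij.swap = ∑ ij : ι × ι with ij.2 < ij.1, f ij :=
    Finset.sum_equiv (Equiv.prodComm ι ι) (by simp) (by simp)
  have hdiag : ∑ i, f (i, i) = ∑ ij : ι × ι with ij.1 = ij.2, f ij := by
    simp [Finset.sum_filter, Fintype.sum_prod_type]
  rw [Finset.sum_add_distrib, hgt, hdiag, Finset.sum_filter, Finset.sum_filter,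
    Finset.sum_filter, ← Finset.sum_add_distrib, ← Finset.sum_add_distrib]
  refine Finset.sum_congr rfl fun ij _ => ?_
  rcases lt_trichotomy ij.1 ij.2 with hij | hij | hij
  · simp [hij, hij.ne, hij.not_gt]
  · simp [hij]
  · simp [hij, hij.ne', hij.not_gt]

lemma sum_sub_add_sum_add_eq {ι : Type*} [Fintype ι] [LinearOrder ι] (r : ι → ℕ) :
    ∑ ij : ι × ι, (r ij.2 + 1 - r ij.1) + ∑ ij : ι × ι with ij.1 < ij.2, (r ij.1 + r ij.2) =
      Fintype.card ι + ∑ ij : ι × ι with ij.1 < ij.2, (2 * max (r ij.1) (r ij.2) + 1) +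
        (Finset.univ.filter fun ij : ι × ι => ij.1 < ij.2 ∧ r ij.1 = r ij.2).card := by
  have hterm (a b : ℕ) :
      b + 1 - a + (a + 1 - b) + (a + b) = 2 * max a b + 1 + if a = b then 1 else 0 := by
    split_ifs <;> omega
  rw [sum_prod_eq_sum_diag_add_sum_lt, add_assoc, ← Finset.sum_add_distrib, add_assoc,
    ← Finset.filter_filter, Finset.card_filter, ← Finset.sum_add_distrib]
  simp [hterm]

end Counting

theorem canonical_pencil_stabilizer_dim_general {h : ℕ} (rr : Fin h → ℕ)
    (hpos : ∃ i, 0 < rr i) :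
    Module.finrank ℂ (stabAlg (canA h rr) (canB h rr)) =
      h + 4 +
        (∑ p ∈ Finset.univ.filter (fun p : Fin h × Fin h => p.1 < p.2),
          (2 * max (rr p.1) (rr p.2) + 1)) +
        (Finset.univ.filter
          (fun p : Fin h × Fin h => p.1 < p.2 ∧ rr p.1 = rr p.2)).card := by
  obtain ⟨i, hi⟩ := hpos
  rw [canA_eq_reindex, canB_eq_reindex, finrank_stabAlg_reindex,
    finrank_stabAlg_eq_add_finrank_isotropyAlg (linearIndependent_pairing_kronecker hi)
      exists_congrDeriv_pairing_kronecker,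
    finrank_kroneckerIsotropyAlg, sum_sub_add_sum_add_eq, Fintype.card_fin]
  ring

/-- The Lie algebra of the stabilizer of the canonical pencil of a
partition `(r₁, …, r_h)` of `r` has dimension
`δ = h + 4 + Σ_{i<j} (2 r_j + 1) + #{(i,j) : i < j, rᵢ = r_j}` over ℂ. -/
theorem canonical_pencil_stabilizer_dim
    (h : ℕ) (hh : 1 ≤ h) (rr : Fin h → ℕ) (hmono : Monotone rr) (hpos : ∀ i, 1 ≤ rr i)
    (r : ℕ) (hsum : ∑ i, rr i = r) :
    Module.finrank ℂ (stabAlg (canA h rr) (canB h rr)) =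
      h + 4 +
        (∑ p ∈ Finset.univ.filter (fun p : Fin h × Fin h => p.1 < p.2), (2 * rr p.2 + 1)) +
        (Finset.univ.filter
          (fun p : Fin h × Fin h => p.1 < p.2 ∧ rr p.1 = rr p.2)).card := by
  rw [canonical_pencil_stabilizer_dim_general rr ⟨⟨0, hh⟩, hpos _⟩]
  congr 2
  refine Finset.sum_congr rfl fun p hp => ?_
  rw [max_eq_right (hmono (Finset.mem_filter_univ p |>.1 hp).le)]
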